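/- arXiv:1309.6666 — 2 statements merged into one kernel-verified Lean document; each statement's English description precedes it below -/
import Mathlib

section
/- For the layered medium, define the fast-variable functions A = ⟦K⁻¹K_h − ρ⁻¹ρ_h⟧, B = ⟦K⁻¹K_h⟧, C = ⟦ρ ρ_m⁻¹⟧, F = ⟦ρ ρ_m⁻¹ B − C⟧, H = ⟦ρ ρ_h⁻¹ A⟧. Then the homogenization coefficients β₁ := −ρ_h⟨ρ⁻¹F⟩ and β₂ := −ρ_h⟨ρ⁻¹H⟩ satisfy β₁ = (ρ_A − ρ_B)(Z_A² − Z_B²) λ² / (192 K_m ρ_m²) and β₂ = (ρ_A − ρ_B)(c_A² − c_B²) λ² / (192 K_m). -/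
open MeasureTheory

/-- `IsBracket lam a F` says that `F` is the function `⟦a⟧`: the unique continuous
`lam`-periodic function with zero mean satisfying
`F(ŷ) = F(0) + ∫₀^ŷ (a(ξ) − ⟨a⟩) dξ` for all `ŷ`. -/
def IsBracket (lam : ℝ) (a F : ℝ → ℝ) : Prop :=
  Continuous F ∧ (∀ y, F (y + lam) = F y) ∧
  (1 / lam) * (∫ y in (0:ℝ)..lam, F y) = 0 ∧
  ∀ yh : ℝ, F yh = F 0 + ∫ ξ in (0:ℝ)..yh,
    (a ξ - (1 / lam) * ∫ s in (0:ℝ)..lam, a s)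

/-!
On one period, `⟦·⟧` is antisymmetric: `⟨⟦a⟧ b⟩ = -⟨a ⟦b⟧⟩`, by integration by parts. A function
with values `r` and `s` on the two halves of the period has bracket `(r - s) / 2 • T`, where `T` is
the triangular wave. Hence the integrands of `F` and `H` are of the form `w T` with `w` two-valued,
and moving the outer bracket onto `ρ⁻¹` turns `⟨ρ⁻¹ ⟦w T⟧⟩` into a multiple of `⟨w T²⟩ = ⟨w⟩ ⟨T²⟩`;
the last equality holds because `T` is symmetric about the middle of the period.
-/

section Development

open Set

variable {lam : ℝ} {a b F G : ℝ → ℝ}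

/-- The defining properties of the bracket `F = ⟦a⟧` seen on the single period `[0, lam]`, with the
integral relation replaced by its almost everywhere derivative `a = ⟨a⟩ + F'`. The constant `m` is
necessarily `⟨a⟩`, because `F'` has mean zero. -/
structure IsBracketOnPeriod (lam : ℝ) (a F : ℝ → ℝ) : Prop where
  absolutelyContinuous : AbsolutelyContinuousOnInterval F 0 lam
  eq_endpoints : F lam = F 0
  integral_eq_zero : ∫ y in (0 : ℝ)..lam, F y = 0
  exists_ae_eq : ∃ m : ℝ, ∀ᵐ y, y ∈ uIoc 0 lam → a y = m + deriv F y

theorem IsBracket.isBracketOnPeriod (hF : IsBracket lam a F) (hlam : lam ≠ 0)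
    (ha : IntervalIntegrable a volume 0 lam) : IsBracketOnPeriod lam a F := by
  obtain ⟨-, hper, hmean, hF⟩ := hF
  set m := (1 / lam) * ∫ s in (0 : ℝ)..lam, a s
  have ham : IntervalIntegrable (fun y ↦ a y - m) volume 0 lam := ha.sub intervalIntegrable_const
  refine ⟨?_, by simpa using hper 0, by simpa [hlam] using hmean, m, ?_⟩
  · rw [funext hF]
    exact (contDiffOn_const (c := F 0)).absolutelyContinuousOnInterval.add
      (ham.absolutelyContinuousOnInterval_intervalIntegral left_mem_uIcc)
  · filter_upwards [ham.ae_hasDerivAt_integral] with y hy hy_mem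
    have hderiv : HasDerivAt F (a y - m) y := by
      rw [funext hF]
      exact (hy (uIoc_subset_uIcc hy_mem) 0 left_mem_uIcc).const_add (F 0)
    rw [hderiv.deriv]
    ring

namespace IsBracketOnPeriod

theorem intervalIntegrable (hF : IsBracketOnPeriod lam a F) :
    IntervalIntegrable a volume 0 lam := by
  obtain ⟨m, hm⟩ := hF.exists_ae_eq
  refine (intervalIntegrable_const (c := m)
    |>.add hF.absolutelyContinuous.intervalIntegrable_deriv).congr_ae ?_
  rw [Filter.EventuallyEq, ae_restrict_iff' measurableSet_uIoc]
  filter_upwards [hm] with y hy hy_mem using (hy hy_mem).symm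

theorem integral_mul_eq_integral_mul_deriv (hF : IsBracketOnPeriod lam a F)
    (hG : IsBracketOnPeriod lam b G) :
    ∫ y in (0 : ℝ)..lam, F y * b y = ∫ y in (0 : ℝ)..lam, F y * deriv G y := by
  obtain ⟨m, hm⟩ := hG.exists_ae_eq
  have hFcont := hF.absolutelyContinuous.continuousOn
  calc ∫ y in (0 : ℝ)..lam, F y * b y
      = ∫ y in (0 : ℝ)..lam, (F y * m + F y * deriv G y) := by
        refine intervalIntegral.integral_congr_ae ?_
        filter_upwards [hm] with y hy hy_mem
        rw [hy hy_mem, mul_add]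
    _ = ∫ y in (0 : ℝ)..lam, F y * deriv G y := by
        rw [intervalIntegral.integral_add (hFcont.intervalIntegrable.mul_const m)
          (hG.absolutelyContinuous.intervalIntegrable_deriv.continuousOn_mul hFcont),
          intervalIntegral.integral_mul_const, hF.integral_eq_zero, zero_mul, zero_add]

theorem integral_mul_eq_neg (hF : IsBracketOnPeriod lam a F) (hG : IsBracketOnPeriod lam b G) :
    ∫ y in (0 : ℝ)..lam, F y * b y = -∫ y in (0 : ℝ)..lam, G y * a y := by
  rw [hF.integral_mul_eq_integral_mul_deriv hG, hG.integral_mul_eq_integral_mul_deriv hF,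
    hF.absolutelyContinuous.integral_mul_deriv_eq_deriv_mul hG.absolutelyContinuous,
    hF.eq_endpoints, hG.eq_endpoints, sub_self, zero_sub]
  simp only [mul_comm]

theorem sub (hF : IsBracketOnPeriod lam a F) (hG : IsBracketOnPeriod lam b G) :
    IsBracketOnPeriod lam (a - b) (F - G) where
  absolutelyContinuous := hF.absolutelyContinuous.sub hG.absolutelyContinuous
  eq_endpoints := by simp only [Pi.sub_apply, hF.eq_endpoints, hG.eq_endpoints]
  integral_eq_zero := by
    simp only [Pi.sub_apply]
    rw [intervalIntegral.integral_sub hF.absolutelyContinuous.continuousOn.intervalIntegrable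
      hG.absolutelyContinuous.continuousOn.intervalIntegrable, hF.integral_eq_zero,
      hG.integral_eq_zero, sub_zero]
  exists_ae_eq := by
    obtain ⟨m, hm⟩ := hF.exists_ae_eq
    obtain ⟨n, hn⟩ := hG.exists_ae_eq
    refine ⟨m - n, ?_⟩
    filter_upwards [hm, hn, hF.absolutelyContinuous.ae_differentiableAt,
      hG.absolutelyContinuous.ae_differentiableAt] with y hmy hny hFy hGy hy
    rw [deriv_sub (hFy (uIoc_subset_uIcc hy)) (hGy (uIoc_subset_uIcc hy)), Pi.sub_apply,
      hmy hy, hny hy]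
    ring

theorem eqOn_zero (hF : IsBracketOnPeriod lam 0 F) (hlam : lam ≠ 0) : EqOn F 0 (uIcc 0 lam) := by
  obtain ⟨m, hm⟩ := hF.exists_ae_eq
  have affine : ∀ y ∈ uIcc 0 lam, F y = F 0 - y * m := by
    intro y hy
    have hsub : uIcc 0 y ⊆ uIcc 0 lam := uIcc_subset_uIcc_left hy
    have hderiv : ∫ x in (0 : ℝ)..y, deriv F x = ∫ _ in (0 : ℝ)..y, -m := by
      refine intervalIntegral.integral_congr_ae ?_
      filter_upwards [hm] with x hmx hx
      exact eq_neg_of_add_eq_zero_right (hmx (uIoc_subset_uIoc_of_uIcc_subset_uIcc hsub hx)).symm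
    rw [(hF.absolutelyContinuous.mono hsub).integral_deriv_eq_sub, intervalIntegral.integral_const,
      sub_zero, smul_eq_mul] at hderiv
    linarith
  have hm_zero : m = 0 := by
    have hlam_m := affine lam right_mem_uIcc
    rw [hF.eq_endpoints, eq_comm, sub_eq_self] at hlam_m
    exact (mul_eq_zero.1 hlam_m).resolve_left hlam
  have hF_const : EqOn F (fun _ ↦ F 0) (uIcc 0 lam) := fun y hy ↦ by
    rw [affine y hy, hm_zero, mul_zero, sub_zero]
  have hF_zero : F 0 = 0 := by
    have hint := intervalIntegral.integral_congr (μ := volume) hF_const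
    simpa [hlam, hF.integral_eq_zero, eq_comm] using hint
  exact fun y hy ↦ (hF_const hy).trans hF_zero

theorem eqOn (hF : IsBracketOnPeriod lam a F) (hG : IsBracketOnPeriod lam a G) (hlam : lam ≠ 0) :
    EqOn F G (uIcc 0 lam) := by
  have hFG := hF.sub hG
  rw [sub_self] at hFG
  exact fun y hy ↦ sub_eq_zero.1 (hFG.eqOn_zero hlam hy)

end IsBracketOnPeriod

/-- `f` takes the value `r` on the first and `s` on the second half of the period `[0, lam)`. -/
def IsLayered {α : Type*} (lam : ℝ) (r s : α) (f : ℝ → α) : Prop :=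
  (∀ y ∈ Ico 0 (lam / 2), f y = r) ∧ ∀ y ∈ Ico (lam / 2) lam, f y = s

namespace IsLayered

theorem map {α β : Type*} {r s : α} {f : ℝ → α} (hf : IsLayered lam r s f) (φ : α → β) :
    IsLayered lam (φ r) (φ s) fun y ↦ φ (f y) :=
  ⟨fun y hy ↦ congrArg φ (hf.1 y hy), fun y hy ↦ congrArg φ (hf.2 y hy)⟩

theorem map₂ {α β γ : Type*} {r s : α} {t u : β} {f : ℝ → α} {g : ℝ → β}
    (hf : IsLayered lam r s f) (hg : IsLayered lam t u g) (φ : α → β → γ) :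
    IsLayered lam (φ r t) (φ s u) fun y ↦ φ (f y) (g y) :=
  ⟨fun y hy ↦ congrArg₂ φ (hf.1 y hy) (hg.1 y hy), fun y hy ↦ congrArg₂ φ (hf.2 y hy) (hg.2 y hy)⟩

variable {r s : ℝ} {f g : ℝ → ℝ}

theorem integral_mul_of_symm (hf : IsLayered lam r s f) (hlam : 0 ≤ lam)
    (hg : IntervalIntegrable g volume 0 lam) (hsymm : ∀ y, g (lam - y) = g y) :
    ∫ y in (0 : ℝ)..lam, f y * g y = (r + s) * ∫ y in (0 : ℝ)..lam / 2, g y := by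
  have hle : 0 ≤ lam / 2 := by linarith
  have hle' : lam / 2 ≤ lam := by linarith
  have hmem : lam / 2 ∈ uIcc 0 lam := mem_uIcc_of_le hle hle'
  have hfst : EqOn (fun y ↦ r * g y) (fun y ↦ f y * g y) (Ioo 0 (lam / 2)) :=
    fun y hy ↦ by simp only [hf.1 y (Ioo_subset_Ico_self hy)]
  have hsnd : EqOn (fun y ↦ s * g y) (fun y ↦ f y * g y) (Ioo (lam / 2) lam) :=
    fun y hy ↦ by simp only [hf.2 y (Ioo_subset_Ico_self hy)]
  have hint_fst : IntervalIntegrable (fun y ↦ f y * g y) volume 0 (lam / 2) :=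
    ((hg.mono_set (uIcc_subset_uIcc_left hmem)).const_mul r).congr_uIoo (uIoo_of_le hle ▸ hfst)
  have hint_snd : IntervalIntegrable (fun y ↦ f y * g y) volume (lam / 2) lam :=
    ((hg.mono_set (uIcc_subset_uIcc_right hmem)).const_mul s).congr_uIoo (uIoo_of_le hle' ▸ hsnd)
  have hreflect : ∫ y in (lam / 2)..lam, g y = ∫ y in (0 : ℝ)..lam / 2, g y := by
    simpa only [hsymm, sub_self, sub_half] using
      intervalIntegral.integral_comp_sub_left g lam (a := lam / 2) (b := lam)
  calc ∫ y in (0 : ℝ)..lam, f y * g y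
      = (∫ y in (0 : ℝ)..lam / 2, f y * g y) + ∫ y in (lam / 2)..lam, f y * g y :=
        (intervalIntegral.integral_add_adjacent_intervals hint_fst hint_snd).symm
    _ = (∫ y in (0 : ℝ)..lam / 2, r * g y) + ∫ y in (lam / 2)..lam, s * g y := by
        rw [intervalIntegral.integral_congr_Ioo_of_le hle hfst,
          intervalIntegral.integral_congr_Ioo_of_le hle' hsnd]
    _ = (r + s) * ∫ y in (0 : ℝ)..lam / 2, g y := by
        rw [intervalIntegral.integral_const_mul, intervalIntegral.integral_const_mul, hreflect,
          add_mul]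

end IsLayered

/-- One period `[0, lam]` of the triangular wave with mean zero and slopes `1` and `-1` on the two
halves: the bracket of the layered function with values `1` and `-1`. It is not extended
periodically beyond `[0, lam]`. -/
noncomputable def triangularWave (lam y : ℝ) : ℝ := lam / 4 - |y - lam / 2|

theorem lipschitzWith_triangularWave (lam : ℝ) : LipschitzWith 1 (triangularWave lam) :=
  .of_dist_le_mul fun x y ↦ by
    simp only [triangularWave, Real.dist_eq, NNReal.coe_one, one_mul, sub_sub_sub_cancel_left]
    rw [abs_sub_comm x y]
    simpa using abs_abs_sub_abs_le (y - lam / 2) (x - lam / 2)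

theorem continuous_triangularWave (lam : ℝ) : Continuous (triangularWave lam) :=
  (lipschitzWith_triangularWave lam).continuous

theorem triangularWave_sub (lam y : ℝ) : triangularWave lam (lam - y) = triangularWave lam y := by
  rw [triangularWave, triangularWave, abs_sub_comm y]
  ring_nf

theorem triangularWave_of_le {y : ℝ} (hy : y ≤ lam / 2) : triangularWave lam y = y - lam / 4 := by
  rw [triangularWave, abs_of_nonpos (by linarith)]
  ring

theorem integral_comp_triangularWave_half (hlam : 0 ≤ lam) (φ : ℝ → ℝ) :
    ∫ y in (0 : ℝ)..lam / 2, φ (triangularWave lam y) = ∫ x in -(lam / 4)..lam / 4, φ x := by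
  have hshift : EqOn (fun y ↦ φ (triangularWave lam y)) (fun y ↦ φ (y - lam / 4))
      (uIcc 0 (lam / 2)) := fun y hy ↦ by
    rw [uIcc_of_le (by linarith)] at hy
    simp only [triangularWave_of_le hy.2]
  rw [intervalIntegral.integral_congr hshift, intervalIntegral.integral_comp_sub_right]
  ring_nf

theorem deriv_triangularWave (lam y : ℝ) :
    deriv (triangularWave lam) y = -SignType.sign (y - lam / 2) := by
  unfold triangularWave
  rw [deriv_const_sub, deriv_comp_sub_const (f := abs), deriv_abs]

namespace IsLayered

variable {r s : ℝ} {f : ℝ → ℝ}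

theorem integral_mul_comp_triangularWave (hf : IsLayered lam r s f) (hlam : 0 ≤ lam) {φ : ℝ → ℝ}
    (hφ : Continuous φ) :
    ∫ y in (0 : ℝ)..lam, f y * φ (triangularWave lam y) =
      (r + s) * ∫ x in -(lam / 4)..lam / 4, φ x := by
  have hcont : Continuous fun y ↦ φ (triangularWave lam y) :=
    hφ.comp (continuous_triangularWave lam)
  rw [hf.integral_mul_of_symm hlam (hcont.intervalIntegrable 0 lam) fun y ↦ by
    rw [triangularWave_sub], integral_comp_triangularWave_half hlam φ]

theorem integral_mul_triangularWave_sq (hf : IsLayered lam r s f) (hlam : 0 ≤ lam) :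
    ∫ y in (0 : ℝ)..lam, f y * triangularWave lam y ^ 2 = (r + s) * lam ^ 3 / 96 := by
  rw [hf.integral_mul_comp_triangularWave hlam (continuous_pow 2), integral_pow]
  ring

theorem mean_eq (hf : IsLayered lam r s f) (hlam : 0 < lam) :
    (1 / lam) * ∫ y in (0 : ℝ)..lam, f y = (r + s) / 2 := by
  have hint := hf.integral_mul_comp_triangularWave hlam.le (continuous_const (y := (1 : ℝ)))
  simp only [mul_one, intervalIntegral.integral_const, smul_eq_mul] at hint
  rw [hint]
  field_simp
  ring

theorem harmonic_mean_eq (hf : IsLayered lam r s f) (hlam : 0 < lam) (hr : r ≠ 0) (hs : s ≠ 0) :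
    ((1 / lam) * ∫ y in (0 : ℝ)..lam, (f y)⁻¹)⁻¹ = 2 * r * s / (r + s) := by
  rw [(hf.map (·⁻¹)).mean_eq hlam, inv_add_inv hr hs, inv_div, div_div_eq_mul_div, mul_assoc]

theorem isBracketOnPeriod (hf : IsLayered lam r s f) (hlam : 0 ≤ lam) :
    IsBracketOnPeriod lam f fun y ↦ (r - s) / 2 * triangularWave lam y where
  absolutelyContinuous :=
    (lipschitzWith_triangularWave lam).lipschitzOnWith.absolutelyContinuousOnInterval.const_mul _
  eq_endpoints := by rw [← triangularWave_sub, sub_self]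
  integral_eq_zero := by
    have hone : IsLayered lam 1 1 fun _ ↦ (1 : ℝ) := ⟨fun _ _ ↦ rfl, fun _ _ ↦ rfl⟩
    have hmean : ∫ y in (0 : ℝ)..lam, triangularWave lam y = 0 := by
      simpa using hone.integral_mul_comp_triangularWave hlam continuous_id
    rw [intervalIntegral.integral_const_mul, hmean, mul_zero]
  exists_ae_eq := by
    refine ⟨(r + s) / 2, ?_⟩
    filter_upwards [Measure.ae_ne volume lam, Measure.ae_ne volume (lam / 2)]
      with y hy_ne hy_half hy
    rw [uIoc_of_le hlam] at hy
    rw [deriv_const_mul_field, deriv_triangularWave]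
    rcases hy_half.lt_or_gt with hlt | hgt
    · rw [hf.1 y ⟨hy.1.le, hlt⟩, sign_neg (sub_neg.2 hlt)]
      simp only [SignType.coe_neg, SignType.coe_one]
      ring
    · rw [hf.2 y ⟨hgt.le, hy.2.lt_of_ne hy_ne⟩, sign_pos (sub_pos.2 hgt)]
      simp only [SignType.coe_one]
      ring

end IsLayered

variable {r s p q : ℝ} {f w : ℝ → ℝ}

theorem IsBracket.eqOn_triangularWave (hF : IsBracket lam a F) (ha : IsLayered lam r s a)
    (hlam : 0 < lam) : EqOn F (fun y ↦ (r - s) / 2 * triangularWave lam y) (uIcc 0 lam) := by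
  have hT := ha.isBracketOnPeriod hlam.le
  exact (hF.isBracketOnPeriod hlam.ne' hT.intervalIntegrable).eqOn hT hlam.ne'

theorem IsBracket.mean_mul_of_eqOn_mul_triangularWave (hF : IsBracket lam a F)
    (hf : IsLayered lam r s f) (hw : IsLayered lam p q w)
    (ha : EqOn a (fun y ↦ w y * triangularWave lam y) (uIcc 0 lam)) (hlam : 0 < lam) :
    (1 / lam) * ∫ y in (0 : ℝ)..lam, f y * F y = -((r - s) * (p + q) * lam ^ 2 / 192) := by
  have hai : IntervalIntegrable a volume 0 lam :=
    ((hw.isBracketOnPeriod hlam.le).intervalIntegrable.mul_continuousOn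
      (continuous_triangularWave lam).continuousOn).congr
      fun y hy ↦ (ha (uIoc_subset_uIcc hy)).symm
  have hmove : ∫ y in (0 : ℝ)..lam, f y * F y
      = -∫ y in (0 : ℝ)..lam, (r - s) / 2 * triangularWave lam y * a y := by
    simpa only [mul_comm (F _)] using
      (hF.isBracketOnPeriod hlam.ne' hai).integral_mul_eq_neg (hf.isBracketOnPeriod hlam.le)
  have hsq : ∫ y in (0 : ℝ)..lam, (r - s) / 2 * triangularWave lam y * a y
      = (r - s) / 2 * ((p + q) * lam ^ 3 / 96) := by
    rw [← hw.integral_mul_triangularWave_sq hlam.le, ← intervalIntegral.integral_const_mul]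
    refine intervalIntegral.integral_congr fun y hy ↦ ?_
    simp only [ha hy]
    ring
  rw [hmove, hsq]
  field_simp
  ring

end Development

/-- For the layered medium, with the fast-variable functions
`A = ⟦K⁻¹K_h − ρ⁻¹ρ_h⟧`, `B = ⟦K⁻¹K_h⟧`, `C = ⟦ρ ρ_m⁻¹⟧`, `F = ⟦ρ ρ_m⁻¹ B − C⟧`,
`H = ⟦ρ ρ_h⁻¹ A⟧`, the homogenization coefficients
`β₁ = −ρ_h⟨ρ⁻¹F⟩` and `β₂ = −ρ_h⟨ρ⁻¹H⟩` have the closed forms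
`β₁ = (ρ_A − ρ_B)(Z_A² − Z_B²)λ²/(192 K_m ρ_m²)` and
`β₂ = (ρ_A − ρ_B)(c_A² − c_B²)λ²/(192 K_m)`. -/
theorem layered_beta_coefficients
    (lam KA KB ρA ρB : ℝ)
    (hlam : 0 < lam) (hKA : 0 < KA) (hKB : 0 < KB) (hρA : 0 < ρA) (hρB : 0 < ρB)
    (K ρ : ℝ → ℝ)
    (hK_per : ∀ y, K (y + lam) = K y) (hρ_per : ∀ y, ρ (y + lam) = ρ y)
    (hKvalA : ∀ y ∈ Set.Ico (0:ℝ) (lam / 2), K y = KA)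
    (hKvalB : ∀ y ∈ Set.Ico (lam / 2) lam, K y = KB)
    (hρvalA : ∀ y ∈ Set.Ico (0:ℝ) (lam / 2), ρ y = ρA)
    (hρvalB : ∀ y ∈ Set.Ico (lam / 2) lam, ρ y = ρB)
    (Km ρm Kh ρh ZA ZB cA cB : ℝ)
    (hKm : Km = (KA + KB) / 2) (hρm : ρm = (ρA + ρB) / 2)
    (hKh : Kh = ((1 / lam) * ∫ y in (0:ℝ)..lam, (K y)⁻¹)⁻¹)
    (hρh : ρh = ((1 / lam) * ∫ y in (0:ℝ)..lam, (ρ y)⁻¹)⁻¹)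
    (hZA : ZA = Real.sqrt (KA * ρA)) (hZB : ZB = Real.sqrt (KB * ρB))
    (hcA : cA = Real.sqrt (KA / ρA)) (hcB : cB = Real.sqrt (KB / ρB))
    (A B C F H : ℝ → ℝ)
    (hA : IsBracket lam (fun yh => Kh / K yh - ρh / ρ yh) A)
    (hB : IsBracket lam (fun yh => Kh / K yh) B)
    (hC : IsBracket lam (fun yh => ρ yh / ρm) C)
    (hF : IsBracket lam (fun yh => ρ yh / ρm * B yh - C yh) F)
    (hH : IsBracket lam (fun yh => ρ yh / ρh * A yh) H) :
    -(ρh * ((1 / lam) * ∫ y in (0:ℝ)..lam, (ρ y)⁻¹ * F y))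
      = (ρA - ρB) * (ZA ^ 2 - ZB ^ 2) * lam ^ 2 / (192 * Km * ρm ^ 2)
    ∧ -(ρh * ((1 / lam) * ∫ y in (0:ℝ)..lam, (ρ y)⁻¹ * H y))
      = (ρA - ρB) * (cA ^ 2 - cB ^ 2) * lam ^ 2 / (192 * Km) := by
  have hK : IsLayered lam KA KB K := ⟨hKvalA, hKvalB⟩
  have hρ : IsLayered lam ρA ρB ρ := ⟨hρvalA, hρvalB⟩
  rw [hK.harmonic_mean_eq hlam hKA.ne' hKB.ne'] at hKh
  rw [hρ.harmonic_mean_eq hlam hρA.ne' hρB.ne'] at hρh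
  have hAT := hA.eqOn_triangularWave (hK.map₂ hρ fun k x ↦ Kh / k - ρh / x) hlam
  have hBT := hB.eqOn_triangularWave (hK.map (Kh / ·)) hlam
  have hCT := hC.eqOn_triangularWave (hρ.map (· / ρm)) hlam
  have meanF := hF.mean_mul_of_eqOn_mul_triangularWave (hρ.map (·⁻¹))
    (hρ.map fun x ↦ x / ρm * ((Kh / KA - Kh / KB) / 2) - (ρA / ρm - ρB / ρm) / 2)
    (fun y hy ↦ by simp only [hBT hy, hCT hy]; ring) hlam
  have meanH := hH.mean_mul_of_eqOn_mul_triangularWave (hρ.map (·⁻¹))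
    (hρ.map fun x ↦ x / ρh * ((Kh / KA - ρh / ρA - (Kh / KB - ρh / ρB)) / 2))
    (fun y hy ↦ by simp only [hAT hy]; ring) hlam
  rw [meanF, meanH, hZA, hZB, hcA, hcB, Real.sq_sqrt (by positivity), Real.sq_sqrt (by positivity),
    Real.sq_sqrt (by positivity), Real.sq_sqrt (by positivity), hKh, hρh, hKm, hρm]
  constructor <;> field_simp <;> ring
end

section
/- For the layered medium with constant impedance, i.e., K_A ρ_A = K_B ρ_B, the normal dispersive homogenization coefficients vanish: with B = ⟦K⁻¹K_h⟧, C = ⟦ρ ρ_m⁻¹⟧, E = ⟦K⁻¹K_h C − B⟧, F = ⟦ρ ρ_m⁻¹ B − C⟧, one has K_h⟨K⁻¹F⟩ = 0, ρ_h⟨ρ⁻¹F⟩ = 0 and ρ_m⁻¹⟨ρE⟩ = 0 (that is, α₁ = β₁ = γ₁ = 0). In particular, a layered medium with constant impedance exhibits no effective dispersion for normally propagating waves at order δ². -/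
open MeasureTheory

/-!
Constant impedance means `K ρ = z` is constant, so `b := K_h / K = ρ / ρ_m`; hence `B = C` and
`E = F`. Writing `u = b - 1 = B'`, one has `F' = u B = (B² / 2)'`, so that `F = B² / 2 + c`, and
`⟨b F⟩ = ⟨F⟩ + ⟨B' (B² / 2 + c)⟩ = 0` because `B' (B² / 2 + c)` is the derivative of a periodic
function. Both `K⁻¹` and `ρ` are multiples of `b`, which gives `α₁ = γ₁ = 0` for an arbitrary
profile `ρ`; if `ρ` takes only two values, then `ρ⁻¹` is affine in `ρ` and `β₁ = 0` as well.
-/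

open Set

theorem absolutelyContinuousOnInterval_const (c a b : ℝ) :
    AbsolutelyContinuousOnInterval (fun _ => c) a b :=
  (LipschitzWith.const c).lipschitzOnWith.absolutelyContinuousOnInterval

theorem absolutelyContinuousOnInterval_pow {f : ℝ → ℝ} {a b : ℝ}
    (hf : AbsolutelyContinuousOnInterval f a b) (n : ℕ) :
    AbsolutelyContinuousOnInterval (fun x => f x ^ n) a b := by
  induction n with
  | zero => simpa only [pow_zero] using absolutelyContinuousOnInterval_const 1 a b
  | succ n ih => simpa only [pow_succ] using ih.fun_mul hf

theorem integral_pow_mul_of_primitive {u f : ℝ → ℝ} {a b : ℝ}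
    (hu : IntervalIntegrable u volume a b) (hf : ∀ x, f x = f a + ∫ t in a..x, u t) (n : ℕ) :
    ∫ x in a..b, f x ^ n * u x = (f b ^ (n + 1) - f a ^ (n + 1)) / (n + 1) := by
  have f_eq : f = fun x => f a + ∫ t in a..x, u t := funext hf
  have f_ac : AbsolutelyContinuousOnInterval f a b := by
    rw [f_eq]
    exact (absolutelyContinuousOnInterval_const _ a b).fun_add
      (hu.absolutelyContinuousOnInterval_intervalIntegral left_mem_uIcc)
  have deriv_pow : ∀ᵐ x, x ∈ uIoc a b →
      deriv (fun x => f x ^ (n + 1)) x = (n + 1) * (f x ^ n * u x) := by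
    filter_upwards [hu.ae_hasDerivAt_integral] with x hx hxab
    have f_deriv : HasDerivAt f (u x) x := by
      rw [f_eq]
      exact (hx (uIoc_subset_uIcc hxab) a left_mem_uIcc).const_add _
    rw [(f_deriv.fun_pow (n + 1)).deriv]
    push_cast [Nat.add_sub_cancel]
    rw [mul_assoc]
  rw [← (absolutelyContinuousOnInterval_pow f_ac (n + 1)).integral_deriv_eq_sub,
    intervalIntegral.integral_congr_ae deriv_pow, intervalIntegral.integral_const_mul,
    mul_div_cancel_left₀ _ n.cast_add_one_ne_zero]

theorem exists_comp_eq_affine_of_eq_or_eq {α k : Type*} [Field k] {w : α → k} {wA wB : k}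
    (hw : ∀ y, w y = wA ∨ w y = wB) (g : k → k) : ∃ p q : k, ∀ y, g (w y) = p + q * w y := by
  rcases eq_or_ne wA wB with rfl | hne
  · exact ⟨g wA, 0, fun y => by rw [(hw y).elim id id, zero_mul, add_zero]⟩
  · have slope : (g wB - g wA) / (wB - wA) * (wB - wA) = g wB - g wA :=
      div_mul_cancel₀ _ (sub_ne_zero.mpr hne.symm)
    refine ⟨g wA - (g wB - g wA) / (wB - wA) * wA, (g wB - g wA) / (wB - wA), fun y => ?_⟩
    rcases hw y with h | h <;> rw [h]
    · ring
    · linear_combination -slope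

/-- The mean value `⟨f⟩` of `f` over the period `[0, lam]`; it is defined for every `f`, with the
junk value `0` when `f` is not integrable there or `lam = 0`. -/
noncomputable def periodMean (lam : ℝ) (f : ℝ → ℝ) : ℝ :=
  (1 / lam) * ∫ y in (0:ℝ)..lam, f y

section PeriodMean

variable {lam : ℝ} {f g w : ℝ → ℝ}

theorem periodMean_const_mul (c : ℝ) (f : ℝ → ℝ) :
    periodMean lam (fun y => c * f y) = c * periodMean lam f := by
  rw [periodMean, periodMean, intervalIntegral.integral_const_mul, mul_left_comm]

theorem periodMean_congr (h : EqOn f g (uIoo 0 lam)) : periodMean lam f = periodMean lam g := by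
  rw [periodMean, periodMean, intervalIntegral.integral_congr_uIoo h]

theorem periodMean_add (hf : IntervalIntegrable f volume 0 lam)
    (hg : IntervalIntegrable g volume 0 lam) :
    periodMean lam (fun y => f y + g y) = periodMean lam f + periodMean lam g := by
  rw [periodMean, periodMean, periodMean, intervalIntegral.integral_add hf hg, mul_add]

theorem periodMean_affine_mul (hw : IntervalIntegrable w volume 0 lam) (hf : Continuous f)
    (p q : ℝ) :
    periodMean lam (fun y => (p + q * w y) * f y)
      = p * periodMean lam f + q * periodMean lam (fun y => w y * f y) := by
  rw [← periodMean_const_mul, ← periodMean_const_mul, ← periodMean_add]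
  · simp only [add_mul, mul_assoc]
  · exact (hf.intervalIntegrable _ _).const_mul p
  · exact (hw.mul_continuousOn hf.continuousOn).const_mul q

theorem periodMean_comp_mul_eq_zero_of_eq_or_eq {wA wB : ℝ} (hw : ∀ y, w y = wA ∨ w y = wB)
    (hw_int : IntervalIntegrable w volume 0 lam) (hf : Continuous f)
    (hf_mean : periodMean lam f = 0) (hwf : periodMean lam (fun y => w y * f y) = 0)
    (g : ℝ → ℝ) : periodMean lam (fun y => g (w y) * f y) = 0 := by
  obtain ⟨p, q, hg⟩ := exists_comp_eq_affine_of_eq_or_eq hw g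
  simp only [hg, periodMean_affine_mul hw_int hf, hf_mean, hwf, mul_zero, add_zero]

end PeriodMean

namespace IsBracket

variable {lam : ℝ} {a F G : ℝ → ℝ}

theorem continuous (hF : IsBracket lam a F) : Continuous F :=
  hF.1

theorem apply_period (hF : IsBracket lam a F) : F lam = F 0 := by
  simpa only [zero_add] using hF.2.1 0

theorem periodMean_eq_zero (hF : IsBracket lam a F) : periodMean lam F = 0 :=
  hF.2.2.1

theorem eq_add_integral (hF : IsBracket lam a F) (y : ℝ) :
    F y = F 0 + ∫ ξ in (0:ℝ)..y, (a ξ - periodMean lam a) :=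
  hF.2.2.2 y

theorem unique (hlam : lam ≠ 0) (hF : IsBracket lam a F) (hG : IsBracket lam a G) : F = G := by
  have diff (y : ℝ) : F y - G y = F 0 - G 0 := by
    rw [hF.eq_add_integral y, hG.eq_add_integral y, add_sub_add_right_eq_sub]
  have integral_F : ∫ y in (0:ℝ)..lam, F y = 0 :=
    (mul_eq_zero.mp hF.periodMean_eq_zero).resolve_left (one_div_ne_zero hlam)
  have integral_G : ∫ y in (0:ℝ)..lam, G y = 0 :=
    (mul_eq_zero.mp hG.periodMean_eq_zero).resolve_left (one_div_ne_zero hlam)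
  have integral_diff : lam * (F 0 - G 0) = 0 := by
    have h := intervalIntegral.integral_sub (μ := volume)
      (hF.continuous.intervalIntegrable 0 lam) (hG.continuous.intervalIntegrable 0 lam)
    simpa only [diff, integral_F, integral_G, intervalIntegral.integral_const, smul_eq_mul,
      sub_zero] using h
  funext y
  rw [← sub_eq_zero, diff y]
  exact (mul_eq_zero.mp integral_diff).resolve_left hlam

theorem integral_pow_mul_sub_periodMean (hF : IsBracket lam a F) {y : ℝ}
    (ha : IntervalIntegrable a volume 0 y) (n : ℕ) :
    ∫ ξ in (0:ℝ)..y, F ξ ^ n * (a ξ - periodMean lam a)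
      = (F y ^ (n + 1) - F 0 ^ (n + 1)) / (n + 1) :=
  integral_pow_mul_of_primitive (ha.sub intervalIntegrable_const) hF.eq_add_integral n

theorem periodMean_pow_mul_sub_periodMean_eq_zero (hF : IsBracket lam a F)
    (ha : IntervalIntegrable a volume 0 lam) (n : ℕ) :
    periodMean lam (fun y => F y ^ n * (a y - periodMean lam a)) = 0 := by
  rw [periodMean, hF.integral_pow_mul_sub_periodMean ha, hF.apply_period, sub_self, zero_div,
    mul_zero]

theorem eq_add_half_sq_sub_sq (hF : IsBracket lam a F) (ha : IntervalIntegrable a volume 0 lam)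
    (hG : IsBracket lam (fun y => F y * (a y - periodMean lam a)) G) {y : ℝ}
    (hy : y ∈ uIcc 0 lam) : G y = G 0 + (F y ^ 2 - F 0 ^ 2) / 2 := by
  have mean : periodMean lam (fun y => F y * (a y - periodMean lam a)) = 0 := by
    simpa only [pow_one] using hF.periodMean_pow_mul_sub_periodMean_eq_zero ha 1
  have primitive := hF.integral_pow_mul_sub_periodMean (ha.mono_set (uIcc_subset_uIcc_left hy)) 1
  simp only [pow_one, Nat.cast_one, one_add_one_eq_two] at primitive
  simp only [hG.eq_add_integral y, mean, sub_zero, primitive]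

theorem periodMean_mul_sub_periodMean_eq_zero (hF : IsBracket lam a F)
    (ha : IntervalIntegrable a volume 0 lam)
    (hG : IsBracket lam (fun y => F y * (a y - periodMean lam a)) G) :
    periodMean lam (fun y => G y * (a y - periodMean lam a)) = 0 := by
  have integrable (n : ℕ) :
      IntervalIntegrable (fun y => F y ^ n * (a y - periodMean lam a)) volume 0 lam :=
    (ha.sub intervalIntegrable_const).continuousOn_mul (hF.continuous.pow n).continuousOn
  calc periodMean lam (fun y => G y * (a y - periodMean lam a))
      = periodMean lam (fun y => (G 0 - F 0 ^ 2 / 2) * (F y ^ 0 * (a y - periodMean lam a))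
          + 1 / 2 * (F y ^ 2 * (a y - periodMean lam a))) := by
        refine periodMean_congr fun y hy => ?_
        simp only [hF.eq_add_half_sq_sub_sq ha hG (uIoo_subset_uIcc_self hy)]
        ring
    _ = 0 := by
        rw [periodMean_add ((integrable 0).const_mul _) ((integrable 2).const_mul _),
          periodMean_const_mul, periodMean_const_mul,
          hF.periodMean_pow_mul_sub_periodMean_eq_zero ha,
          hF.periodMean_pow_mul_sub_periodMean_eq_zero ha, mul_zero, mul_zero, add_zero]

theorem periodMean_mul_eq_zero (hF : IsBracket lam a F) (ha : IntervalIntegrable a volume 0 lam)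
    (hG : IsBracket lam (fun y => F y * (a y - periodMean lam a)) G) :
    periodMean lam (fun y => a y * G y) = 0 :=
  calc periodMean lam (fun y => a y * G y)
      = periodMean lam (fun y => (-periodMean lam a + 1 * a y) * G y) := by
        rw [periodMean_affine_mul ha hG.continuous, hG.periodMean_eq_zero, mul_zero, zero_add,
          one_mul]
    _ = periodMean lam (fun y => G y * (a y - periodMean lam a)) :=
        congrArg _ (funext fun y => by ring)
    _ = 0 := hF.periodMean_mul_sub_periodMean_eq_zero ha hG

end IsBracket

/-- A function on the line that is `lam`-periodic, with the value `u` on the first half `[0, lam/2)`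
of the period and `v` on the second half `[lam/2, lam)`: the profile of a two-layer medium. -/
structure IsLayered_s17 {α : Type*} (lam : ℝ) (u v : α) (f : ℝ → α) : Prop where
  periodic : Function.Periodic f lam
  eq_left : ∀ y ∈ Ico 0 (lam / 2), f y = u
  eq_right : ∀ y ∈ Ico (lam / 2) lam, f y = v

namespace IsLayered_s17

section Values

variable {α : Type*} {lam : ℝ} {u v : α} {f : ℝ → α}

theorem mul [Mul α] {u' v' : α} {g : ℝ → α} (hf : IsLayered_s17 lam u v f)
    (hg : IsLayered_s17 lam u' v' g) :
    IsLayered_s17 lam (u * u') (v * v') (f * g) where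
  periodic := hf.periodic.mul hg.periodic
  eq_left y hy := by rw [Pi.mul_apply, hf.eq_left y hy, hg.eq_left y hy]
  eq_right y hy := by rw [Pi.mul_apply, hf.eq_right y hy, hg.eq_right y hy]

theorem eq_or_eq (hf : IsLayered_s17 lam u v f) (hlam : 0 < lam) (y : ℝ) :
    f y = u ∨ f y = v := by
  obtain ⟨x, hx, hyx⟩ := hf.periodic.exists_mem_Ico₀ hlam y
  rw [hyx]
  exact (lt_or_ge x (lam / 2)).imp (fun h => hf.eq_left x ⟨hx.1, h⟩)
    (fun h => hf.eq_right x ⟨h, hx.2⟩)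

theorem eqOn_left (hf : IsLayered_s17 lam u v f) (hlam : 0 < lam) :
    EqOn (fun _ => u) f (uIoo 0 (lam / 2)) := fun y hy =>
  (hf.eq_left y (Ioo_subset_Ico_self (uIoo_of_le (half_pos hlam).le ▸ hy))).symm

theorem eqOn_right (hf : IsLayered_s17 lam u v f) (hlam : 0 < lam) :
    EqOn (fun _ => v) f (uIoo (lam / 2) lam) := fun y hy =>
  (hf.eq_right y (Ioo_subset_Ico_self (uIoo_of_le (half_le_self hlam.le) ▸ hy))).symm

end Values

section PeriodMean

variable {lam u v : ℝ} {f : ℝ → ℝ}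

theorem intervalIntegrable_left (hf : IsLayered_s17 lam u v f) (hlam : 0 < lam) :
    IntervalIntegrable f volume 0 (lam / 2) :=
  intervalIntegrable_const.congr_uIoo (hf.eqOn_left hlam)

theorem intervalIntegrable_right (hf : IsLayered_s17 lam u v f) (hlam : 0 < lam) :
    IntervalIntegrable f volume (lam / 2) lam :=
  intervalIntegrable_const.congr_uIoo (hf.eqOn_right hlam)

theorem intervalIntegrable (hf : IsLayered_s17 lam u v f) (hlam : 0 < lam) :
    IntervalIntegrable f volume 0 lam :=
  (hf.intervalIntegrable_left hlam).trans (hf.intervalIntegrable_right hlam)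

theorem periodMean_eq (hf : IsLayered_s17 lam u v f) (hlam : 0 < lam) :
    periodMean lam f = (u + v) / 2 := by
  rw [periodMean, ← intervalIntegral.integral_add_adjacent_intervals
      (hf.intervalIntegrable_left hlam) (hf.intervalIntegrable_right hlam),
    ← intervalIntegral.integral_congr_uIoo (hf.eqOn_left hlam),
    ← intervalIntegral.integral_congr_uIoo (hf.eqOn_right hlam),
    intervalIntegral.integral_const, intervalIntegral.integral_const, smul_eq_mul, smul_eq_mul]
  field_simp
  ring

end PeriodMean

end IsLayered_s17

theorem inv_eq_inv_mul_of_mul_eq {G₀ : Type*} [CommGroupWithZero G₀] {x y z : G₀} (hz : z ≠ 0)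
    (hxy : x * y = z) : x⁻¹ = z⁻¹ * y := by
  have hy : y ≠ 0 := right_ne_zero_of_mul (hxy ▸ hz)
  rw [← hxy, mul_inv, inv_mul_cancel_right₀ hy]

theorem harmonicMean_div_eq_div_periodMean {lam z : ℝ} {K ρ : ℝ → ℝ} (hz : z ≠ 0)
    (hKρ : ∀ y, K y * ρ y = z) (y : ℝ) :
    (periodMean lam fun x => (K x)⁻¹)⁻¹ / K y = ρ y / periodMean lam ρ := by
  simp only [div_eq_mul_inv, inv_eq_inv_mul_of_mul_eq hz (hKρ _), periodMean_const_mul, mul_inv,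
    inv_inv]
  field_simp

theorem constant_impedance_no_normal_dispersion_general
    {lam z ρm Kh : ℝ} {K ρ B C E F : ℝ → ℝ}
    (hlam : lam ≠ 0) (hz : z ≠ 0) (hKρ : ∀ y, K y * ρ y = z)
    (hρ_int : IntervalIntegrable ρ volume 0 lam) (hρm : ρm = periodMean lam ρ) (hρm0 : ρm ≠ 0)
    (hKh : Kh = (periodMean lam fun y => (K y)⁻¹)⁻¹)
    (hB : IsBracket lam (fun y => Kh / K y) B) (hC : IsBracket lam (fun y => ρ y / ρm) C)
    (hE : IsBracket lam (fun y => Kh / K y * C y - B y) E)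
    (hF : IsBracket lam (fun y => ρ y / ρm * B y - C y) F) :
    Kh * periodMean lam (fun y => (K y)⁻¹ * F y) = 0
    ∧ (∀ ρA ρB, (∀ y, ρ y = ρA ∨ ρ y = ρB) →
        (periodMean lam fun y => (ρ y)⁻¹)⁻¹ * periodMean lam (fun y => (ρ y)⁻¹ * F y) = 0)
    ∧ ρm⁻¹ * periodMean lam (fun y => ρ y * E y) = 0 := by
  have coeff_eq : ∀ y, Kh / K y = ρ y / ρm := by
    rw [hKh, hρm]
    exact harmonicMean_div_eq_div_periodMean hz hKρ
  simp only [coeff_eq] at hB hE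
  obtain rfl : B = C := hB.unique hlam hC
  obtain rfl : E = F := hE.unique hlam hF
  have coeff_int : IntervalIntegrable (fun y => ρ y / ρm) volume 0 lam := hρ_int.div_const ρm
  have coeff_mean : periodMean lam (fun y => ρ y / ρm) = 1 := by
    simp only [div_eq_inv_mul, periodMean_const_mul, ← hρm, inv_mul_cancel₀ hρm0]
  have ρE_mean : periodMean lam (fun y => ρ y * E y) = 0 := by
    have h : periodMean lam (fun y => ρ y / ρm * E y) = 0 := by
      refine hB.periodMean_mul_eq_zero coeff_int ?_
      convert hE using 3
      rw [coeff_mean]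
      ring
    simp only [div_eq_inv_mul, mul_assoc, periodMean_const_mul] at h
    exact (mul_eq_zero.mp h).resolve_left (inv_ne_zero hρm0)
  refine ⟨?_, fun ρA ρB hρ => ?_, ?_⟩
  · simp only [inv_eq_inv_mul_of_mul_eq hz (hKρ _), mul_assoc, periodMean_const_mul, ρE_mean,
      mul_zero]
  · rw [periodMean_comp_mul_eq_zero_of_eq_or_eq hρ hρ_int hE.continuous hE.periodMean_eq_zero
      ρE_mean (·⁻¹), mul_zero]
  · rw [ρE_mean, mul_zero]

/-- For the layered medium with constant impedance (`K_A ρ_A = K_B ρ_B`),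
the normal dispersive homogenization coefficients vanish: with `B = ⟦K⁻¹K_h⟧`,
`C = ⟦ρ ρ_m⁻¹⟧`, `E = ⟦K⁻¹K_h C − B⟧`, `F = ⟦ρ ρ_m⁻¹ B − C⟧`, one has
`α₁ = K_h⟨K⁻¹F⟩ = 0`, `β₁`-numerator `ρ_h⟨ρ⁻¹F⟩ = 0` and `γ₁ = ρ_m⁻¹⟨ρE⟩ = 0`.
A constant-impedance layered medium has no effective normal dispersion at order `δ²`. -/
theorem constant_impedance_no_normal_dispersion
    (lam KA KB ρA ρB : ℝ)
    (hlam : 0 < lam) (hKA : 0 < KA) (hKB : 0 < KB) (hρA : 0 < ρA) (hρB : 0 < ρB)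
    (hZ : KA * ρA = KB * ρB)
    (K ρ : ℝ → ℝ)
    (hK_per : ∀ y, K (y + lam) = K y) (hρ_per : ∀ y, ρ (y + lam) = ρ y)
    (hKvalA : ∀ y ∈ Set.Ico (0:ℝ) (lam / 2), K y = KA)
    (hKvalB : ∀ y ∈ Set.Ico (lam / 2) lam, K y = KB)
    (hρvalA : ∀ y ∈ Set.Ico (0:ℝ) (lam / 2), ρ y = ρA)
    (hρvalB : ∀ y ∈ Set.Ico (lam / 2) lam, ρ y = ρB)
    (Km ρm Kh ρh : ℝ)
    (hKm : Km = (KA + KB) / 2) (hρm : ρm = (ρA + ρB) / 2)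
    (hKh : Kh = ((1 / lam) * ∫ y in (0:ℝ)..lam, (K y)⁻¹)⁻¹)
    (hρh : ρh = ((1 / lam) * ∫ y in (0:ℝ)..lam, (ρ y)⁻¹)⁻¹)
    (B C E F : ℝ → ℝ)
    (hB : IsBracket lam (fun yh => Kh / K yh) B)
    (hC : IsBracket lam (fun yh => ρ yh / ρm) C)
    (hE : IsBracket lam (fun yh => Kh / K yh * C yh - B yh) E)
    (hF : IsBracket lam (fun yh => ρ yh / ρm * B yh - C yh) F) :
    Kh * ((1 / lam) * ∫ y in (0:ℝ)..lam, (K y)⁻¹ * F y) = 0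
    ∧ ρh * ((1 / lam) * ∫ y in (0:ℝ)..lam, (ρ y)⁻¹ * F y) = 0
    ∧ ρm⁻¹ * ((1 / lam) * ∫ y in (0:ℝ)..lam, ρ y * E y) = 0 := by
  have hK : IsLayered_s17 lam KA KB K := ⟨hK_per, hKvalA, hKvalB⟩
  have hρ : IsLayered_s17 lam ρA ρB ρ := ⟨hρ_per, hρvalA, hρvalB⟩
  have hKρ (y : ℝ) : K y * ρ y = KA * ρA :=
    ((hK.mul hρ).eq_or_eq hlam y).elim id (·.trans hZ.symm)
  have hρm_mean : ρm = periodMean lam ρ := hρm.trans (hρ.periodMean_eq hlam).symm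
  have hρm0 : ρm ≠ 0 := by rw [hρm]; positivity
  obtain ⟨hα, hβ, hγ⟩ := constant_impedance_no_normal_dispersion_general hlam.ne'
    (mul_pos hKA hρA).ne' hKρ (hρ.intervalIntegrable hlam) hρm_mean hρm0 hKh hB hC hE hF
  exact ⟨hα, hρh ▸ hβ ρA ρB (hρ.eq_or_eq hlam), hγ⟩
end
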